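/- Let a, b, c, d ∈ ℝ³. The convex hull of the six edge midpoints (a+b)/2, (a+c)/2, (a+d)/2, (b+c)/2, (b+d)/2, (c+d)/2 has Lebesgue volume equal to 1/2 of the volume of the convex hull of {a, b, c, d}. -/

import Mathlib

open MeasureTheory

namespace OctAux

abbrev E := EuclideanSpace ℝ (Fin 3)

def S : Set E := {x | 0 ≤ x 0 ∧ 0 ≤ x 1 ∧ 0 ≤ x 2 ∧ x 0 + x 1 + x 2 ≤ 1}

def O : Set E := {x | (0 ≤ x 0 ∧ 0 ≤ x 1 ∧ 0 ≤ x 2 ∧ x 0 + x 1 + x 2 ≤ 1) ∧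
  x 0 ≤ 1/2 ∧ x 1 ≤ 1/2 ∧ x 2 ≤ 1/2 ∧ 1/2 ≤ x 0 + x 1 + x 2}

def V : Set E := {!₂[0,0,0], !₂[1,0,0], !₂[0,1,0], !₂[0,0,1]}

def W : Set E := {!₂[1/2,0,0], !₂[0,1/2,0], !₂[0,0,1/2], !₂[1/2,1/2,0], !₂[1/2,0,1/2], !₂[0,1/2,1/2]}

lemma conv_aux {s t x y : ℝ} {c : ℝ} (hs : 0 ≤ s) (ht : 0 ≤ t) (hst : s + t = 1)
    (hx : c ≤ x) (hy : c ≤ y) : c ≤ s * x + t * y := by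
  have h1 := mul_le_mul_of_nonneg_left hx hs
  have h2 := mul_le_mul_of_nonneg_left hy ht
  have : s * c + t * c = c := by rw [← add_mul, hst, one_mul]
  linarith

lemma convS : Convex ℝ S := by
  rintro x ⟨h0, h1, h2, h3⟩ y ⟨k0, k1, k2, k3⟩ s t hs ht hst
  have a0 := conv_aux hs ht hst h0 k0
  have a1 := conv_aux hs ht hst h1 k1
  have a2 := conv_aux hs ht hst h2 k2
  have a3 := conv_aux hs ht hst (neg_le_neg h3) (neg_le_neg k3)
  simp only [S, Set.mem_setOf_eq, PiLp.add_apply, PiLp.smul_apply, smul_eq_mul]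
  refine ⟨a0, a1, a2, ?_⟩
  linarith

lemma convO : Convex ℝ O := by
  rintro x ⟨hx, h0, h1, h2, h3⟩ y ⟨hy, k0, k1, k2, k3⟩ s t hs ht hst
  have a0 := conv_aux hs ht hst (neg_le_neg h0) (neg_le_neg k0)
  have a1 := conv_aux hs ht hst (neg_le_neg h1) (neg_le_neg k1)
  have a2 := conv_aux hs ht hst (neg_le_neg h2) (neg_le_neg k2)
  have a3 := conv_aux hs ht hst h3 k3
  refine ⟨convS hx hy hs ht hst, ?_⟩
  simp only [PiLp.add_apply, PiLp.smul_apply, smul_eq_mul]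
  refine ⟨?_, ?_, ?_, ?_⟩ <;> linarith

lemma hullV : convexHull ℝ V = S := by
  apply Set.Subset.antisymm
  · apply convexHull_min _ convS
    rintro x (rfl | rfl | rfl | rfl) <;> simp [S]
  · rintro x ⟨h0, h1, h2, h3⟩
    have := (convex_convexHull ℝ V).sum_mem (t := Finset.univ)
      (w := ![1 - x 0 - x 1 - x 2, x 0, x 1, x 2])
      (z := ![!₂[0,0,0], !₂[1,0,0], !₂[0,1,0], !₂[0,0,1]])
      (by intro i _; fin_cases i <;> simp <;> linarith)
      (by simp [Fin.sum_univ_succ]; try ring)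
      (by intro i _; apply subset_convexHull; fin_cases i <;> simp [V])
    convert this using 1
    ext i
    fin_cases i <;> simp [Fin.sum_univ_succ]

lemma hullW : convexHull ℝ W = O := by
  apply Set.Subset.antisymm
  · apply convexHull_min _ convO
    rintro x (rfl | rfl | rfl | rfl | rfl | rfl) <;> simp [O] <;> norm_num
  · rintro x ⟨⟨h0, h1, h2, h3⟩, k0, k1, k2, k3⟩
    obtain ⟨u, hu⟩ : ∃ u, u = 2 * (x 0 + x 1) - 1 := ⟨_, rfl⟩
    obtain ⟨v, hv⟩ : ∃ v, v = 2 * (x 0 + x 2) - 1 := ⟨_, rfl⟩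
    obtain ⟨w, hw⟩ : ∃ w, w = 2 * (x 1 + x 2) - 1 := ⟨_, rfl⟩
    obtain ⟨r, hr⟩ : ∃ r, r = (1 - |u| - |v| - |w|) / 6 := ⟨_, rfl⟩
    have hr0 : 0 ≤ r := by
      rw [hr]
      rcases abs_cases u with ⟨e1, _⟩ | ⟨e1, _⟩ <;> rcases abs_cases v with ⟨e2, _⟩ | ⟨e2, _⟩ <;>
      rcases abs_cases w with ⟨e3, _⟩ | ⟨e3, _⟩ <;> rw [e1, e2, e3] <;> linarith
    have pu := neg_abs_le u
    have pv := neg_abs_le v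
    have pw := neg_abs_le w
    have qu := le_abs_self u
    have qv := le_abs_self v
    have qw := le_abs_self w
    have := (convex_convexHull ℝ W).sum_mem (t := Finset.univ)
      (w := ![(|w| - w)/2 + r, (|v| - v)/2 + r, (|u| - u)/2 + r,
              (|u| + u)/2 + r, (|v| + v)/2 + r, (|w| + w)/2 + r])
      (z := ![!₂[1/2,0,0], !₂[0,1/2,0], !₂[0,0,1/2], !₂[1/2,1/2,0], !₂[1/2,0,1/2], !₂[0,1/2,1/2]])
      (by intro i _; fin_cases i <;> simp <;> linarith)
      (by simp [Fin.sum_univ_succ]; linarith)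
      (by intro i _; apply subset_convexHull; fin_cases i <;> simp [W])
    convert this using 1
    ext i
    fin_cases i <;> simp [Fin.sum_univ_succ] <;> linarith

lemma null (f : E →ₗ[ℝ] ℝ) (hf : f ≠ 0) (c : ℝ) : volume {x | f x = c} = 0 := by
  have h := Measure.addHaar_affineSubspace (volume : Measure E)
    ((AffineSubspace.mk' c (⊥ : Submodule ℝ ℝ)).comap f.toAffineMap) (by
      intro h
      apply hf
      have key : ∀ x, f x = c := by
        intro x
        have : x ∈ (AffineSubspace.mk' c (⊥ : Submodule ℝ ℝ)).comap f.toAffineMap := by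
          rw [h]; trivial
        simpa [AffineSubspace.mem_comap, AffineSubspace.mem_mk', sub_eq_zero] using this
      ext1 x
      have h0 := key 0
      simp only [map_zero] at h0
      simp [key, ← h0])
  convert h using 2
  ext x
  simp [AffineSubspace.mem_mk', sub_eq_zero]

lemma corner (v : E) (f : E →ₗ[ℝ] ℝ) (hf : f ≠ 0) (c : ℝ) 
    (h : ∀ x, ((1/2:ℝ) • (x - v) + v ∈ S ∧ c ≤ f ((1/2:ℝ) • (x - v) + v)) ↔ x ∈ S) :
    volume (S ∩ {x | c < f x}) = volume S / 8 := by
  have e1 : volume (S ∩ {x | c < f x}) = volume (S ∩ {x | c ≤ f x}) := by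
    apply measure_congr
    have : ∀ᵐ x : E, ¬ (f x = c) := by
      rw [ae_iff]; simpa using null f hf c
    filter_upwards [this] with x hx
    apply propext
    show (x ∈ S ∧ c < f x) ↔ (x ∈ S ∧ c ≤ f x)
    rw [le_iff_lt_or_eq]
    tauto
  have e2 : S ∩ {x | c ≤ f x} = AffineMap.homothety v (1/2:ℝ) '' S := by
    ext x
    simp only [Set.mem_image, AffineMap.homothety_apply, vsub_eq_sub, vadd_eq_add]
    constructor
    · intro hx
      have : (1/2:ℝ) • (((2:ℝ) • (x - v) + v) - v) + v = x := by
        rw [add_sub_cancel_right, smul_smul]; norm_num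
      refine ⟨(2:ℝ) • (x - v) + v, (h _).1 ?_, this⟩
      rw [this]; exact hx
    · rintro ⟨y, hy, rfl⟩
      exact (h y).2 hy
  rw [e1, e2, Measure.addHaar_image_homothety]
  have : ENNReal.ofReal |(1/2:ℝ) ^ Module.finrank ℝ E| = 8⁻¹ := by
    rw [finrank_euclideanSpace_fin, abs_of_nonneg (by positivity)]
    rw [show ((1/2:ℝ)^3) = (8:ℝ)⁻¹ by norm_num, ENNReal.ofReal_inv_of_pos (by norm_num)]
    norm_num
  rw [this, mul_comm, ENNReal.div_eq_inv_mul, mul_comm]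

noncomputable def pr (i : Fin 3) : E →ₗ[ℝ] ℝ := (EuclideanSpace.proj i : E →L[ℝ] ℝ).toLinearMap

@[simp] lemma pr_apply (i : Fin 3) (x : E) : pr i x = x i := rfl

noncomputable def sm : E →ₗ[ℝ] ℝ := -(pr 0 + pr 1 + pr 2)

@[simp] lemma sm_apply (x : E) : sm x = -(x 0 + x 1 + x 2) := rfl

lemma c0 : volume (S ∩ {x | 1/2 < pr 0 x}) = volume S / 8 := by
  apply corner !₂[1,0,0] 
  · intro h; simpa using congrArg (fun f => f !₂[1,0,0]) h
  · intro x
    simp [S]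
    constructor
    · rintro ⟨⟨_, _, _, _⟩, _⟩; refine ⟨?_, ?_, ?_, ?_⟩ <;> linarith
    · rintro ⟨_, _, _, _⟩; refine ⟨⟨?_, ?_, ?_, ?_⟩, ?_⟩ <;> linarith

lemma c1 : volume (S ∩ {x | 1/2 < pr 1 x}) = volume S / 8 := by
  apply corner !₂[0,1,0] 
  · intro h; simpa using congrArg (fun f => f !₂[0,1,0]) h
  · intro x
    simp [S]
    constructor
    · rintro ⟨⟨_, _, _, _⟩, _⟩; refine ⟨?_, ?_, ?_, ?_⟩ <;> linarith
    · rintro ⟨_, _, _, _⟩; refine ⟨⟨?_, ?_, ?_, ?_⟩, ?_⟩ <;> linarith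

lemma c2 : volume (S ∩ {x | 1/2 < pr 2 x}) = volume S / 8 := by
  apply corner !₂[0,0,1] 
  · intro h; simpa using congrArg (fun f => f !₂[0,0,1]) h
  · intro x
    simp [S]
    constructor
    · rintro ⟨⟨_, _, _, _⟩, _⟩; refine ⟨?_, ?_, ?_, ?_⟩ <;> linarith
    · rintro ⟨_, _, _, _⟩; refine ⟨⟨?_, ?_, ?_, ?_⟩, ?_⟩ <;> linarith

lemma c3 : volume (S ∩ {x | -1/2 < sm x}) = volume S / 8 := by
  apply corner !₂[0,0,0] 
  · intro h; simpa using congrArg (fun f => f !₂[0,0,1]) h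
  · intro x
    simp [S]
    constructor
    · rintro ⟨⟨_, _, _, _⟩, _⟩; refine ⟨?_, ?_, ?_, ?_⟩ <;> linarith
    · rintro ⟨_, _, _, _⟩; refine ⟨⟨?_, ?_, ?_, ?_⟩, ?_⟩ <;> linarith

lemma meas (f : E →ₗ[ℝ] ℝ) (c : ℝ) : MeasurableSet {x | c < f x} :=
  measurableSet_lt measurable_const f.continuous_of_finiteDimensional.measurable

lemma finS : volume S ≠ ⊤ := by
  rw [← hullV]
  have : V.Finite := by unfold V; exact Set.toFinite _
  exact (isBounded_convexHull.2 this.isBounded).measure_lt_top.ne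

lemma volO : volume O = volume S / 2 := by
  have d0 := measure_inter_add_diff (μ := volume) S (meas (pr 0) (1/2))
  have d1 := measure_inter_add_diff (μ := volume) (S \ {x | 1/2 < pr 0 x}) (meas (pr 1) (1/2))
  have d2 := measure_inter_add_diff (μ := volume)
    ((S \ {x | 1/2 < pr 0 x}) \ {x | 1/2 < pr 1 x}) (meas (pr 2) (1/2))
  have d3 := measure_inter_add_diff (μ := volume)
    (((S \ {x | 1/2 < pr 0 x}) \ {x | 1/2 < pr 1 x}) \ {x | 1/2 < pr 2 x}) (meas sm (-1/2))
  have e1 : (S \ {x | 1/2 < pr 0 x}) ∩ {x | 1/2 < pr 1 x} = S ∩ {x | 1/2 < pr 1 x} := by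
    ext x
    simp only [S, Set.mem_inter_iff, Set.mem_diff, Set.mem_setOf_eq, pr_apply, sm_apply, not_lt]
    constructor
    · rintro ⟨⟨h, _⟩, h'⟩; exact ⟨h, h'⟩
    · rintro ⟨⟨_, _, _, _⟩, _⟩; refine ⟨⟨⟨?_, ?_, ?_, ?_⟩, ?_⟩, ?_⟩ <;> linarith
  have e2 : ((S \ {x | 1/2 < pr 0 x}) \ {x | 1/2 < pr 1 x}) ∩ {x | 1/2 < pr 2 x}
      = S ∩ {x | 1/2 < pr 2 x} := by
    ext x
    simp only [S, Set.mem_inter_iff, Set.mem_diff, Set.mem_setOf_eq, pr_apply, sm_apply, not_lt]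
    constructor
    · rintro ⟨⟨⟨h, _⟩, _⟩, h'⟩; exact ⟨h, h'⟩
    · rintro ⟨⟨_, _, _, _⟩, _⟩; refine ⟨⟨⟨⟨?_, ?_, ?_, ?_⟩, ?_⟩, ?_⟩, ?_⟩ <;> linarith
  have e3 : (((S \ {x | 1/2 < pr 0 x}) \ {x | 1/2 < pr 1 x}) \ {x | 1/2 < pr 2 x})
      ∩ {x | -1/2 < sm x} = S ∩ {x | -1/2 < sm x} := by
    ext x
    simp only [S, Set.mem_inter_iff, Set.mem_diff, Set.mem_setOf_eq, pr_apply, sm_apply, not_lt]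
    constructor
    · rintro ⟨⟨⟨⟨h, _⟩, _⟩, _⟩, h'⟩; exact ⟨h, h'⟩
    · rintro ⟨⟨_, _, _, _⟩, _⟩; refine ⟨⟨⟨⟨⟨?_, ?_, ?_, ?_⟩, ?_⟩, ?_⟩, ?_⟩, ?_⟩ <;> linarith
  have e4 : (((S \ {x | 1/2 < pr 0 x}) \ {x | 1/2 < pr 1 x}) \ {x | 1/2 < pr 2 x})
      \ {x | -1/2 < sm x} = O := by
    ext x
    simp only [S, O, Set.mem_diff, Set.mem_setOf_eq, pr_apply, sm_apply, not_lt]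
    constructor
    · rintro ⟨⟨⟨⟨h, _⟩, _⟩, _⟩, h'⟩
      refine ⟨h, ?_, ?_, ?_, ?_⟩ <;> linarith
    · rintro ⟨h, _, _, _, _⟩
      refine ⟨⟨⟨⟨h, ?_⟩, ?_⟩, ?_⟩, ?_⟩ <;> linarith
  rw [e3, e4, c3] at d3
  rw [e2, c2, ← d3] at d2
  rw [e1, c1, ← d2] at d1
  rw [c0, ← d1] at d0
  have hS := finS
  have hO : volume O ≠ ⊤ := by
    intro h; rw [h] at d0; simp at d0; exact hS d0.symm
  lift volume S to NNReal using hS with s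
  lift volume O to NNReal using hO with o
  rw [show (8 : ENNReal) = ((8 : NNReal) : ENNReal) by norm_num,
    ← ENNReal.coe_div (by norm_num)] at d0
  rw [show (2 : ENNReal) = ((2 : NNReal) : ENNReal) by norm_num,
    ← ENNReal.coe_div (by norm_num)]
  norm_cast at d0 ⊢
  rw [← NNReal.coe_inj] at d0 ⊢
  push_cast at d0 ⊢
  linarith

end OctAux

open OctAux in
/-- The central octahedron produced by midpoint refinement, namely the convex hull of the
six edge midpoints of the tetrahedron with vertices `a, b, c, d`, has Lebesgue volume equal
to `1/2` of the volume of the tetrahedron `conv {a, b, c, d}`. -/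
theorem stmt_9 (a b c d : EuclideanSpace ℝ (Fin 3)) :
    volume (convexHull ℝ ({midpoint ℝ a b, midpoint ℝ a c, midpoint ℝ a d,
        midpoint ℝ b c, midpoint ℝ b d, midpoint ℝ c d} : Set (EuclideanSpace ℝ (Fin 3))))
      = volume (convexHull ℝ ({a, b, c, d} : Set (EuclideanSpace ℝ (Fin 3)))) / 2 := by
  let L : E →ₗ[ℝ] E := (pr 0).smulRight (b - a) + (pr 1).smulRight (c - a) + (pr 2).smulRight (d - a)
  let A : E →ᵃ[ℝ] E := AffineMap.const ℝ E a + L.toAffineMap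
  have hA : ∀ x, A x = a + (x 0 • (b - a) + x 1 • (c - a) + x 2 • (d - a)) := fun x => rfl
  have hvol : ∀ s : Set E, volume (A '' s) = ENNReal.ofReal |LinearMap.det L| * volume s := by
    intro s
    have : A '' s = (fun x => a + x) '' (L '' s) := by
      rw [Set.image_image]; rfl
    rw [this, Set.image_add_left, measure_preimage_add, Measure.addHaar_image_linearMap]
  have h1 : ({a, b, c, d} : Set E) = A '' V := by
    simp [V, Set.image_insert_eq, hA]
  have h2 : ({midpoint ℝ a b, midpoint ℝ a c, midpoint ℝ a d,
        midpoint ℝ b c, midpoint ℝ b d, midpoint ℝ c d} : Set E) = A '' W := by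
    have m1 : A !₂[1/2,0,0] = midpoint ℝ a b := by
      rw [hA, midpoint_eq_smul_add]; simp; module
    have m2 : A !₂[0,1/2,0] = midpoint ℝ a c := by
      rw [hA, midpoint_eq_smul_add]; simp; module
    have m3 : A !₂[0,0,1/2] = midpoint ℝ a d := by
      rw [hA, midpoint_eq_smul_add]; simp; module
    have m4 : A !₂[1/2,1/2,0] = midpoint ℝ b c := by
      rw [hA, midpoint_eq_smul_add]; simp; module
    have m5 : A !₂[1/2,0,1/2] = midpoint ℝ b d := by
      rw [hA, midpoint_eq_smul_add]; simp; module
    have m6 : A !₂[0,1/2,1/2] = midpoint ℝ c d := by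
      rw [hA, midpoint_eq_smul_add]; simp; module
    simp only [W, Set.image_insert_eq, Set.image_singleton, m1, m2, m3, m4, m5, m6]
  rw [h1, h2, ← AffineMap.image_convexHull, ← AffineMap.image_convexHull, hullV, hullW, hvol, hvol,
    volO, mul_div_assoc]
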